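/- Let (W,S) be a Coxeter system, I ⊆ S, x ∈ W^I a minimal coset representative, and z ∈ W_I. Then the interval structure is compatible: the map u ↦ xu gives an isomorphism from the Bruhat graph of W_I restricted to elements ≤ z onto the Bruhat graph of the coset xW_I restricted to elements ≤ xz; in particular u ≤ u' in W_I if and only if xu ≤ xu' in W. -/

import Mathlib

variable {B W : Type*} [Group W] {M : CoxeterMatrix B}

/-- An edge of the Bruhat graph: `a → a * t` for a reflection `t` increasing the length. -/
def bruhatEdge (cs : CoxeterSystem M W) (a b : W) : Prop :=
  ∃ t, cs.IsReflection t ∧ b = a * t ∧ cs.length a < cs.length b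

/-- The Bruhat order on a Coxeter group. -/
def bruhatLE (cs : CoxeterSystem M W) : W → W → Prop :=
  Relation.ReflTransGen (bruhatEdge cs)

/-- Bruhat order relative to the parabolic subgroup `W_I` (using reflections of `W_I`). -/
def bruhatLEPar (cs : CoxeterSystem M W) (I : Set B) : W → W → Prop :=
  Relation.ReflTransGen (fun a b => ∃ t, cs.IsReflection t ∧
    t ∈ Subgroup.closure (cs.simple '' I) ∧ b = a * t ∧ cs.length a < cs.length b)

/-!
Sending `s i` to `(t, ε) ↦ (s i * t * s i, ε + [t = s i])` defines an action of `W` on `W × ZMod 2`,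
because the left inversion sequence of the word `(i j)^(M i j)` consists of one list written twice.
The parity that `w` adds to `(t, 0)` detects whether `t` is a right inversion of `w`. As the parity
is a cocycle, the right inversions of `u * v` form the symmetric difference of those of `v` and the
conjugates by `v⁻¹` of those of `u`.

If `x` is minimal in `x W_I`, no reflection of `W_I` is an inversion of `x`, so `x * u` and `u` have
the same inversions in `W_I`; this matches the edges. All inversions of an element of `W_I` lie in
`W_I`, so an edge of the Bruhat graph that leaves a coset `a W_I` strictly increases the minimal
length of the coset. A chain from `x * u` to `x * u'` therefore never leaves `x W_I`.
-/

section InversionParity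

open CoxeterSystem (alternatingWord)

variable [DecidableEq W] (cs : CoxeterSystem M W)

/-- The permutation by which the simple reflection `s i` acts on signed elements of `W`: it
conjugates by `s i` and flips the sign of `s i`. Signs are written additively in `ZMod 2`, and the
first component ranges over all of `W` rather than over the reflections only. -/
def signedConj (i : B) : Equiv.Perm (W × ZMod 2) :=
  Function.Involutive.toPerm
    (fun q => (cs.simple i * q.1 * cs.simple i, q.2 + if q.1 = cs.simple i then 1 else 0))
    fun q => by
      have conj_eq_iff : cs.simple i * q.1 * cs.simple i = cs.simple i ↔ q.1 = cs.simple i := by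
        rw [mul_eq_right, ← cs.inv_simple, inv_mul_eq_one, eq_comm, cs.inv_simple]
      simp only [conj_eq_iff, add_assoc, CharTwo.add_self_eq_zero, add_zero]
      simp [mul_assoc]

lemma signedConj_apply (i : B) (q : W × ZMod 2) :
    signedConj cs i q =
      (cs.simple i * q.1 * cs.simple i, q.2 + if q.1 = cs.simple i then 1 else 0) := rfl

lemma prod_map_signedConj_reverse (ω : List B) (q : W × ZMod 2) :
    (ω.reverse.map (signedConj cs)).prod q =
      ((cs.wordProd ω)⁻¹ * q.1 * cs.wordProd ω, q.2 + (cs.leftInvSeq ω).count q.1) := by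
  induction ω generalizing q with
  | nil => simp
  | cons i ω ih =>
    have count_conj : ((cs.leftInvSeq ω).map (MulAut.conj (cs.simple i))).count q.1 =
        (cs.leftInvSeq ω).count (cs.simple i * q.1 * cs.simple i) := by
      have conj_conj : q.1 = MulAut.conj (cs.simple i) (cs.simple i * q.1 * cs.simple i) := by
        simp [mul_assoc]
      conv_lhs => rw [conj_conj]
      exact List.count_map_of_injective _ _ (MulAut.conj (cs.simple i)).injective _
    rw [List.reverse_cons, List.map_append, List.prod_append, List.map_singleton,
      List.prod_singleton, Equiv.Perm.mul_apply, ih, signedConj_apply, CoxeterSystem.leftInvSeq,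
      List.count_cons, count_conj]
    ext
    · simp [cs.wordProd_cons, mul_assoc]
    · simp only [beq_iff_eq, eq_comm (a := cs.simple i), Nat.cast_add, Nat.cast_ite, Nat.cast_one,
        Nat.cast_zero]
      ring

lemma prod_map_reverse_alternatingWord {G : Type*} [Monoid G] (f : B → G) (i j : B) (n : ℕ) :
    ((alternatingWord j i (2 * n)).reverse.map f).prod = (f i * f j) ^ n := by
  induction n with
  | zero => simp [alternatingWord]
  | succ n ih =>
    rw [mul_add, mul_one, CoxeterSystem.alternatingWord_succ, CoxeterSystem.alternatingWord_succ,
      pow_succ', ← ih]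
    simp [mul_assoc]

lemma even_count_leftInvSeq_alternatingWord (i j : B) (t : W) :
    Even ((cs.leftInvSeq (alternatingWord i j (2 * M i j))).count t) := by
  set l := cs.leftInvSeq (alternatingWord i j (2 * M i j)) with hl
  have length_l : l.length = 2 * M i j := by simp [hl]
  have periodic : l.take (M i j) = l.drop (M i j) := by
    refine List.ext_getElem (by simp only [List.length_take, List.length_drop]; omega) ?_
    intro k hk _
    have hk : k < M i j := by simp only [List.length_take] at hk; omega
    simp only [List.getElem_take, List.getElem_drop, hl]
    rw [cs.getElem_leftInvSeq_alternatingWord _ _ _ _ (by omega),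
      cs.getElem_leftInvSeq_alternatingWord _ _ _ _ (by omega),
      cs.prod_alternatingWord_eq_mul_pow, cs.prod_alternatingWord_eq_mul_pow,
      show (2 * (M i j + k) + 1) / 2 = M i j + (2 * k + 1) / 2 by omega, pow_add]
    simp
  rw [← List.take_append_drop (M i j) l, List.count_append, ← periodic]
  exact Even.add_self _

lemma isLiftable_signedConj : M.IsLiftable (signedConj cs) := by
  intro i j
  ext1 q
  have wordProd_eq_one : cs.wordProd (alternatingWord j i (2 * M i j)) = 1 := by
    simp [cs.prod_alternatingWord_eq_mul_pow]
  have count_eq_zero :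
      ((cs.leftInvSeq (alternatingWord j i (2 * M i j))).count q.1 : ZMod 2) = 0 := by
    rw [ZMod.natCast_eq_zero_iff_even, M.symmetric]
    exact even_count_leftInvSeq_alternatingWord cs j i q.1
  rw [← prod_map_reverse_alternatingWord, prod_map_signedConj_reverse, wordProd_eq_one,
    count_eq_zero]
  simp

/-- The action of `W` on `W × ZMod 2` by signed conjugation. -/
def signedConjHom : W →* Equiv.Perm (W × ZMod 2) :=
  cs.lift ⟨signedConj cs, isLiftable_signedConj cs⟩

/-- The parity of the number of times `t` occurs in the right inversion sequence of a word for `w`,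
defined through the signed conjugation action so that it is independent of the word. -/
def inversionParity (w t : W) : ZMod 2 := (signedConjHom cs w (t, 0)).2

lemma signedConjHom_inv_wordProd (ω : List B) (q : W × ZMod 2) :
    signedConjHom cs (cs.wordProd ω)⁻¹ q =
      ((cs.wordProd ω)⁻¹ * q.1 * cs.wordProd ω, q.2 + (cs.leftInvSeq ω).count q.1) := by
  have apply_simple : signedConjHom cs ∘ cs.simple = signedConj cs :=
    funext (cs.lift_apply_simple (isLiftable_signedConj cs))
  rw [← prod_map_signedConj_reverse, ← cs.wordProd_reverse, CoxeterSystem.wordProd, map_list_prod,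
    List.map_map, apply_simple]

lemma inversionParity_inv_wordProd (ω : List B) (t : W) :
    inversionParity cs (cs.wordProd ω)⁻¹ t = (cs.leftInvSeq ω).count t := by
  rw [inversionParity, signedConjHom_inv_wordProd, zero_add]

lemma signedConjHom_apply (w : W) (q : W × ZMod 2) :
    signedConjHom cs w q = (w * q.1 * w⁻¹, q.2 + inversionParity cs w q.1) := by
  obtain ⟨ω, hω⟩ := cs.wordProd_surjective w⁻¹
  obtain rfl : w = (cs.wordProd ω)⁻¹ := by simp [hω]
  rw [signedConjHom_inv_wordProd, inversionParity_inv_wordProd, inv_inv]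

lemma inversionParity_mul (u v t : W) :
    inversionParity cs (u * v) t =
      inversionParity cs v t + inversionParity cs u (v * t * v⁻¹) := by
  rw [inversionParity, map_mul, Equiv.Perm.mul_apply, signedConjHom_apply,
    signedConjHom_apply, zero_add]

lemma inversionParity_one (t : W) : inversionParity cs 1 t = 0 := by
  simp [inversionParity]

lemma inversionParity_simple_self (i : B) : inversionParity cs (cs.simple i) (cs.simple i) = 1 := by
  simpa using inversionParity_inv_wordProd cs [i] (cs.simple i)

lemma inversionParity_self {t : W} (ht : cs.IsReflection t) : inversionParity cs t t = 1 := by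
  obtain ⟨w, i, rfl⟩ := ht
  have cancel := inversionParity_mul cs w w⁻¹ (w * cs.simple i * w⁻¹)
  rw [mul_inv_cancel, inversionParity_one] at cancel
  rw [inversionParity_mul, inversionParity_mul]
  have conj_inv : w⁻¹ * (w * cs.simple i * w⁻¹) * w⁻¹⁻¹ = cs.simple i := by group
  rw [conj_inv] at cancel ⊢
  rw [mul_inv_cancel_right, inversionParity_simple_self]
  linear_combination -cancel

lemma isRightInversion_of_inversionParity_ne_zero {w t : W} (h : inversionParity cs w t ≠ 0) :
    cs.IsRightInversion w t := by
  obtain ⟨ω, hω, hw⟩ := cs.exists_isReduced w⁻¹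
  obtain rfl : w = (cs.wordProd ω)⁻¹ := by simp [← hw]
  rw [inversionParity_inv_wordProd] at h
  have mem : t ∈ cs.leftInvSeq ω := by
    contrapose! h
    rw [List.count_eq_zero.2 h, Nat.cast_zero]
  exact cs.isRightInversion_inv_iff.2 (cs.isLeftInversion_of_mem_leftInvSeq hω mem)

theorem isRightInversion_iff_inversionParity_ne_zero {w t : W} :
    cs.IsRightInversion w t ↔ inversionParity cs w t ≠ 0 := by
  refine ⟨fun h h0 => ?_, isRightInversion_of_inversionParity_ne_zero cs⟩
  have parity_mul : inversionParity cs (w * t) t ≠ 0 := by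
    rw [inversionParity_mul, mul_inv_cancel_right, h0, inversionParity_self cs h.1, add_zero]
    exact one_ne_zero
  exact h.1.isRightInversion_mul_left_iff.1
    (isRightInversion_of_inversionParity_ne_zero cs parity_mul) h

end InversionParity

section RightInversions

variable {cs : CoxeterSystem M W}

theorem isRightInversion_mul_iff {u v t : W} :
    cs.IsRightInversion (u * v) t ↔
      Xor (cs.IsRightInversion v t) (cs.IsRightInversion u (v * t * v⁻¹)) := by
  classical
  have add_ne_zero_iff_xor : ∀ a b : ZMod 2, a + b ≠ 0 ↔ Xor (a ≠ 0) (b ≠ 0) := by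
    unfold Xor; decide
  simp only [isRightInversion_iff_inversionParity_ne_zero, inversionParity_mul, add_ne_zero_iff_xor]

lemma eq_simple_of_isRightInversion {i : B} {t : W} (h : cs.IsRightInversion (cs.simple i) t) :
    t = cs.simple i := by
  have length_eq_zero : cs.length (cs.simple i * t) = 0 := by
    have := h.2
    rw [cs.length_simple] at this
    omega
  rw [cs.length_eq_zero_iff] at length_eq_zero
  rw [← cs.inv_simple, eq_inv_of_mul_eq_one_right length_eq_zero]

lemma not_isRightInversion_one (t : W) : ¬cs.IsRightInversion 1 t := by
  simp [CoxeterSystem.IsRightInversion]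

/-- The standard parabolic subgroup `W_I`. -/
abbrev standardParabolic (cs : CoxeterSystem M W) (I : Set B) : Subgroup W :=
  Subgroup.closure (cs.simple '' I)

theorem mem_standardParabolic_of_isRightInversion {I : Set B} {v t : W}
    (hv : v ∈ standardParabolic cs I) (h : cs.IsRightInversion v t) :
    t ∈ standardParabolic cs I := by
  have simple_mul : ∀ i ∈ I, ∀ y ∈ standardParabolic cs I,
      (cs.IsRightInversion y t → t ∈ standardParabolic cs I) →
      cs.IsRightInversion (cs.simple i * y) t → t ∈ standardParabolic cs I := by
    intro i hi y hy ih h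
    rcases isRightInversion_mul_iff.1 h with ⟨hyt, -⟩ | ⟨hit, -⟩
    · exact ih hyt
    · obtain rfl : t = y⁻¹ * cs.simple i * y := by
        rw [← eq_simple_of_isRightInversion hit]; group
      exact mul_mem (mul_mem (inv_mem hy) (Subgroup.subset_closure ⟨i, hi, rfl⟩)) hy
  induction hv using Subgroup.closure_induction_left with
  | one => exact absurd h (not_isRightInversion_one t)
  | mul_left _ hs y hy ih =>
    obtain ⟨i, hi, rfl⟩ := hs
    exact simple_mul i hi y hy ih h
  | inv_mul_cancel _ hs y hy ih =>
    obtain ⟨i, hi, rfl⟩ := hs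
    rw [cs.inv_simple] at h
    exact simple_mul i hi y hy ih h

end RightInversions

section MinimalCosetRepresentatives

variable (cs : CoxeterSystem M W) (H : Subgroup W)

/-- `x` has minimal length in its left coset `x H`. For `H = W_I` this says `x ∈ W^I`. -/
def IsMinCosetRep (x : W) : Prop := ∀ d ∈ H, cs.length x ≤ cs.length (x * d)

/-- The minimal length of an element of a left coset of `H`. -/
noncomputable def minCosetLength (c : W ⧸ H) : ℕ := sInf (cs.length '' {w | (w : W ⧸ H) = c})

variable {cs H}

lemma minCosetLength_le (w : W) : minCosetLength cs H w ≤ cs.length w :=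
  Nat.sInf_le ⟨w, rfl, rfl⟩

lemma exists_length_eq_minCosetLength (c : W ⧸ H) :
    ∃ w : W, (w : W ⧸ H) = c ∧ cs.length w = minCosetLength cs H c :=
  Nat.sInf_mem (Set.Nonempty.image cs.length ⟨c.out, c.out_eq'⟩)

lemma IsMinCosetRep.isRightInversion_mul_iff {x u t : W} (hx : IsMinCosetRep cs H x) (hu : u ∈ H)
    (ht : t ∈ H) : cs.IsRightInversion (x * u) t ↔ cs.IsRightInversion u t := by
  have not_inversion : ¬cs.IsRightInversion x (u * t * u⁻¹) := fun h =>
    (hx _ (mul_mem (mul_mem hu ht) (inv_mem hu))).not_gt h.2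
  simp only [_root_.isRightInversion_mul_iff, not_inversion, xor_iff_iff_not, not_false_eq_true,
    iff_true]

end MinimalCosetRepresentatives

section BruhatGraph

variable {cs : CoxeterSystem M W} {I : Set B} {a b x u u' : W}

lemma bruhatEdge_iff_isRightInversion : bruhatEdge cs a b ↔ cs.IsRightInversion b (a⁻¹ * b) := by
  constructor
  · rintro ⟨t, ht, rfl, hlt⟩
    rw [inv_mul_cancel_left]
    exact ⟨ht, by rwa [mul_assoc, ht.mul_self, mul_one]⟩
  · rintro ⟨ht, hlt⟩
    refine ⟨a⁻¹ * b, ht, (mul_inv_cancel_left a b).symm, ?_⟩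
    rwa [← ht.inv, mul_inv_rev, inv_inv, mul_inv_cancel_left] at hlt

/-- An edge of the Bruhat graph labelled by a reflection of `W_I`; `bruhatLEPar` is the reflexive
transitive closure of this relation. -/
abbrev bruhatEdgePar (cs : CoxeterSystem M W) (I : Set B) (a b : W) : Prop :=
  ∃ t, cs.IsReflection t ∧ t ∈ standardParabolic cs I ∧ b = a * t ∧ cs.length a < cs.length b

lemma bruhatEdgePar_iff :
    bruhatEdgePar cs I a b ↔ bruhatEdge cs a b ∧ a⁻¹ * b ∈ standardParabolic cs I := by
  constructor
  · rintro ⟨t, ht, htI, rfl, hlt⟩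
    exact ⟨⟨t, ht, rfl, hlt⟩, by rwa [inv_mul_cancel_left]⟩
  · rintro ⟨⟨t, ht, rfl, hlt⟩, htI⟩
    exact ⟨t, ht, by rwa [inv_mul_cancel_left] at htI, rfl, hlt⟩

theorem IsMinCosetRep.bruhatEdgePar_mul_iff (hx : IsMinCosetRep cs (standardParabolic cs I) x)
    (hu : u ∈ standardParabolic cs I) :
    bruhatEdgePar cs I (x * u) (x * u') ↔ bruhatEdgePar cs I u u' := by
  have inv_mul_eq : (x * u)⁻¹ * (x * u') = u⁻¹ * u' := by group
  rw [bruhatEdgePar_iff, bruhatEdgePar_iff, inv_mul_eq]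
  refine and_congr_left fun h => ?_
  have hu' : u' ∈ standardParabolic cs I := by simpa using mul_mem hu h
  rw [bruhatEdge_iff_isRightInversion, bruhatEdge_iff_isRightInversion, inv_mul_eq,
    hx.isRightInversion_mul_iff hu' h]

lemma minCosetLength_lt_of_bruhatEdge (hab : bruhatEdge cs a b)
    (h : a⁻¹ * b ∉ standardParabolic cs I) :
    minCosetLength cs (standardParabolic cs I) a <
      minCosetLength cs (standardParabolic cs I) b := by
  obtain ⟨y, hyb, hy⟩ :=
    exists_length_eq_minCosetLength (cs := cs) (b : W ⧸ standardParabolic cs I)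
  have hd : y⁻¹ * b ∈ standardParabolic cs I := QuotientGroup.eq.1 hyb
  have inversion : cs.IsRightInversion (y * (y⁻¹ * b)) (a⁻¹ * b) := by
    rwa [mul_inv_cancel_left, ← bruhatEdge_iff_isRightInversion]
  have inv_mul_comm : a⁻¹ * b = b⁻¹ * a := by simpa using inversion.1.inv.symm
  rcases isRightInversion_mul_iff.1 inversion with ⟨hdt, -⟩ | ⟨⟨-, hlt⟩, -⟩
  · exact absurd (mem_standardParabolic_of_isRightInversion hd hdt) h
  · have conj_eq : y * (y⁻¹ * b * (a⁻¹ * b) * (y⁻¹ * b)⁻¹) = a * (y⁻¹ * b)⁻¹ := by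
      rw [inv_mul_comm]; group
    rw [conj_eq] at hlt
    calc minCosetLength cs (standardParabolic cs I) a
      _ = minCosetLength cs (standardParabolic cs I) ↑(a * (y⁻¹ * b)⁻¹) := by
        rw [QuotientGroup.mk_mul_of_mem a (inv_mem hd)]
      _ ≤ cs.length (a * (y⁻¹ * b)⁻¹) := minCosetLength_le _
      _ < cs.length y := hlt
      _ = minCosetLength cs (standardParabolic cs I) b := hy

lemma mk_eq_of_bruhatLEPar (h : bruhatLEPar cs I a b) :
    (a : W ⧸ standardParabolic cs I) = b := by
  induction h with
  | refl => rfl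
  | tail _ hbc ih => exact ih.trans (QuotientGroup.eq.2 (bruhatEdgePar_iff.1 hbc).2)

lemma bruhatLE_of_bruhatLEPar (h : bruhatLEPar cs I a b) : bruhatLE cs a b :=
  Relation.ReflTransGen.mono (fun _ _ hab => (bruhatEdgePar_iff.1 hab).1) a b h

lemma bruhatLEPar_or_minCosetLength_lt (h : bruhatLE cs a b) :
    bruhatLEPar cs I a b ∨ minCosetLength cs (standardParabolic cs I) a <
      minCosetLength cs (standardParabolic cs I) b := by
  induction h with
  | refl => exact Or.inl .refl
  | @tail b c _ hbc ih =>
    by_cases hI : b⁻¹ * c ∈ standardParabolic cs I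
    · rw [← QuotientGroup.eq.2 hI]
      exact ih.imp_left fun hab => hab.tail (bruhatEdgePar_iff.2 ⟨hbc, hI⟩)
    · have hlt := minCosetLength_lt_of_bruhatEdge hbc hI
      refine Or.inr (ih.elim (fun hab => ?_) fun hab => hab.trans hlt)
      rwa [mk_eq_of_bruhatLEPar hab]

theorem bruhatLEPar_iff :
    bruhatLEPar cs I a b ↔ bruhatLE cs a b ∧ (a : W ⧸ standardParabolic cs I) = b := by
  refine ⟨fun h => ⟨bruhatLE_of_bruhatLEPar h, mk_eq_of_bruhatLEPar h⟩, fun ⟨hle, hmk⟩ => ?_⟩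
  refine (bruhatLEPar_or_minCosetLength_lt hle).resolve_right ?_
  rw [hmk]
  exact lt_irrefl _

theorem IsMinCosetRep.bruhatLEPar_mul_iff (hx : IsMinCosetRep cs (standardParabolic cs I) x)
    (hu : u ∈ standardParabolic cs I) :
    bruhatLEPar cs I (x * u) (x * u') ↔ bruhatLEPar cs I u u' := by
  have mem_of_mk_eq {v : W} (h : (u : W ⧸ standardParabolic cs I) = v) :
      v ∈ standardParabolic cs I := by simpa using mul_mem hu (QuotientGroup.eq.1 h)
  constructor
  · suffices ∀ w, bruhatLEPar cs I (x * u) w → bruhatLEPar cs I u (x⁻¹ * w) by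
      intro h
      simpa using this _ h
    intro w h
    induction h with
    | refl => rw [inv_mul_cancel_left]; exact .refl
    | @tail v w _ hvw ih =>
      refine ih.tail ((hx.bruhatEdgePar_mul_iff (mem_of_mk_eq (mk_eq_of_bruhatLEPar ih))).1 ?_)
      simpa only [mul_inv_cancel_left] using hvw
  · intro h
    induction h with
    | refl => exact .refl
    | tail huv hvw ih =>
      exact ih.tail ((hx.bruhatEdgePar_mul_iff (mem_of_mk_eq (mk_eq_of_bruhatLEPar huv))).2 hvw)

end BruhatGraph

/-- For `x ∈ W^I` and `z ∈ W_I`, left multiplication `u ↦ x u` identifies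
the Bruhat graph of `W_I` restricted to `{u ≤ z}` with the Bruhat graph of the coset
`x W_I` restricted to `{≤ x z}`; in particular `u ≤ u'` in `W_I` iff `x u ≤ x u'` in `W`. -/
theorem stmt_18 (cs : CoxeterSystem M W) (I : Set B) (x : W)
    (hx : ∀ d ∈ Subgroup.closure (cs.simple '' I), cs.length x ≤ cs.length (x * d))
    (z : W) (hz : z ∈ Subgroup.closure (cs.simple '' I)) :
    (∀ u ∈ Subgroup.closure (cs.simple '' I), ∀ u' ∈ Subgroup.closure (cs.simple '' I),
      bruhatLEPar cs I u z → bruhatLEPar cs I u' z →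
      ((∃ t, cs.IsReflection t ∧ t ∈ Subgroup.closure (cs.simple '' I) ∧
          u' = u * t ∧ cs.length u < cs.length u') ↔
        bruhatEdge cs (x * u) (x * u'))) ∧
    (∀ u ∈ Subgroup.closure (cs.simple '' I), ∀ u' ∈ Subgroup.closure (cs.simple '' I),
      (bruhatLEPar cs I u u' ↔ bruhatLE cs (x * u) (x * u'))) := by
  have inv_mul_mem (u u' : W) (hu : u ∈ standardParabolic cs I)
      (hu' : u' ∈ standardParabolic cs I) :
      (x * u)⁻¹ * (x * u') ∈ standardParabolic cs I := by
    simpa [mul_assoc] using mul_mem (inv_mem hu) hu'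
  have hx : IsMinCosetRep cs (standardParabolic cs I) x := hx
  refine ⟨fun u hu u' hu' _ _ => ?_, fun u hu u' hu' => ?_⟩
  · calc bruhatEdgePar cs I u u'
      _ ↔ bruhatEdgePar cs I (x * u) (x * u') := (hx.bruhatEdgePar_mul_iff hu).symm
      _ ↔ bruhatEdge cs (x * u) (x * u') :=
        bruhatEdgePar_iff.trans (and_iff_left (inv_mul_mem u u' hu hu'))
  · calc bruhatLEPar cs I u u'
      _ ↔ bruhatLEPar cs I (x * u) (x * u') := (hx.bruhatLEPar_mul_iff hu).symm
      _ ↔ bruhatLE cs (x * u) (x * u') :=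
        bruhatLEPar_iff.trans (and_iff_left (QuotientGroup.eq.2 (inv_mul_mem u u' hu hu')))
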